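/- Let f : ℂ → ℂ be a transcendental entire function and let x ∈ ℂ be such that f(x) = x and f⁻¹({x}) = {x} (x is the only preimage of x under f). Then the set of fixed points {z ∈ ℂ : f(z) = z} of f is infinite. -/

import Mathlib

open Complex Metric Set Filter Topology Polynomial

/-- A holomorphic function whose derivative is at most doubled in a ball covers a ball of
comparable size around the image of the centre. -/
theorem ball_subset_image_ball_of_norm_deriv_le {g : ℂ → ℂ} {a : ℂ} {r : ℝ} (hr : 0 < r)
    (hg : DifferentiableOn ℂ g (ball a r))
    (hle : ∀ z ∈ ball a r, ‖deriv g z‖ ≤ 2 * ‖deriv g a‖) :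
    ball (g a) (‖deriv g a‖ * r / 24) ⊆ g '' ball a r := by
  set D := ‖deriv g a‖ with hD
  rcases (norm_nonneg (deriv g a)).eq_or_lt with h0 | hpos
  · rw [hD, ← h0]; simp
  have hsub : closedBall a (r / 6) ⊆ ball a r := closedBall_subset_ball (by linarith)
  have hdiff : ∀ z ∈ closedBall a (r / 6), DifferentiableAt ℂ g z := fun z hz ↦
    (hg z (hsub hz)).differentiableAt (isOpen_ball.mem_nhds (hsub hz))
  have hderiv : ∀ z ∈ closedBall a (r / 6), ‖deriv g z - deriv g a‖ ≤ D / 2 := by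
    intro z hz
    have hmaps : MapsTo (deriv g) (ball a r) (closedBall (deriv g a) (3 * D)) := by
      intro y hy
      rw [mem_closedBall, dist_eq_norm]
      linarith [norm_sub_le (deriv g y) (deriv g a), hle y hy]
    have h := dist_le_div_mul_dist_of_mapsTo_ball (hg.deriv isOpen_ball) hmaps (hsub hz)
    rw [dist_eq_norm] at h
    calc _ ≤ 3 * D / r * dist z a := h
      _ ≤ 3 * D / r * (r / 6) := by gcongr; exact hz
      _ = D / 2 := by field_simp; ring
  have hlow : ∀ z ∈ closedBall a (r / 6), D / 2 * ‖z - a‖ ≤ ‖g z - g a‖ := by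
    intro z hz
    have h := (convex_closedBall a (r / 6)).norm_image_sub_le_of_norm_hasDerivWithin_le
      (f := fun y ↦ g y - deriv g a * y) (f' := fun y ↦ deriv g y - deriv g a) (C := D / 2)
      (fun y hy ↦ ((hdiff y hy).hasDerivAt.sub
        (by simpa using (hasDerivAt_id y).const_mul (deriv g a))).hasDerivWithinAt)
      hderiv (mem_closedBall_self (by positivity)) hz
    have h2 : ‖deriv g a * (z - a)‖ = D * ‖z - a‖ := norm_mul _ _
    have h3 : deriv g a * (z - a) =
        (g z - g a) - ((g z - deriv g a * z) - (g a - deriv g a * a)) := by ring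
    rw [h3] at h2
    linarith [norm_sub_le (g z - g a) ((g z - deriv g a * z) - (g a - deriv g a * a))]
  have hcont : DiffContOnCl ℂ g (ball a (r / 6)) :=
    DifferentiableOn.diffContOnCl (by
      rw [closure_ball a (by positivity)]
      exact fun z hz ↦ (hdiff z hz).differentiableWithinAt)
  have hfreq : ∃ᶠ z in 𝓝 a, g z ≠ g a := by
    have h1 : ∃ᶠ z in 𝓝 a, z ∈ ({a}ᶜ : Set ℂ) :=
      frequently_mem_iff_neBot.2 (inferInstance : (𝓝[≠] a).NeBot)
    refine (h1.and_eventually (closedBall_mem_nhds a (show 0 < r / 6 by positivity))).mono ?_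
    rintro z ⟨hza, hz⟩ heq
    have h2 := hlow z hz
    rw [heq, sub_self, norm_zero] at h2
    have h3 : 0 < ‖z - a‖ := norm_pos_iff.2 (sub_ne_zero.2 hza)
    have h4 : 0 < D / 2 * ‖z - a‖ := by positivity
    linarith
  have h := hcont.ball_subset_image_closedBall (ε := D * r / 12) (by positivity)
    (fun z hz ↦ by
      have h2 := hlow z (sphere_subset_closedBall hz)
      rw [mem_sphere, dist_eq_norm] at hz
      rw [hz] at h2
      linarith) hfreq
  rw [show D * r / 24 = D * r / 12 / 2 by ring]
  exact h.trans (image_mono hsub)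

/-- **Bloch's theorem**, with a non-optimal constant. -/
theorem exists_ball_subset_image_ball {g : ℂ → ℂ} {c : ℂ} {s S : ℝ} (hs : 0 < s) (hsS : s < S)
    (hg : DifferentiableOn ℂ g (ball c S)) :
    ∃ b, ball b (‖deriv g c‖ * s / 48) ⊆ g '' ball c s := by
  rcases (norm_nonneg (deriv g c)).eq_or_lt with h0 | hpos
  · exact ⟨0, by rw [← h0]; simp⟩
  have hsub : closedBall c s ⊆ ball c S := closedBall_subset_ball hsS
  have hcont : ContinuousOn (fun z ↦ ‖deriv g z‖ * (s - dist z c)) (closedBall c s) :=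
    (((hg.deriv isOpen_ball).continuousOn.mono hsub).norm).mul (by fun_prop)
  obtain ⟨a, ha, hmax⟩ := (isCompact_closedBall c s).exists_isMaxOn
    ⟨c, mem_closedBall_self hs.le⟩ hcont
  have hac : ‖deriv g c‖ * s ≤ ‖deriv g a‖ * (s - dist a c) := by
    simpa using hmax (mem_closedBall_self hs.le)
  have ht : 0 < s - dist a c := by
    have : 0 < ‖deriv g a‖ * (s - dist a c) := lt_of_lt_of_le (by positivity) hac
    exact pos_of_mul_pos_right this (norm_nonneg _)
  have hball : ball a ((s - dist a c) / 2) ⊆ ball c s :=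
    ball_subset_ball' (by linarith)
  have h := ball_subset_image_ball_of_norm_deriv_le (half_pos ht)
    (hg.mono (hball.trans (ball_subset_closedBall.trans hsub))) (fun z hz ↦ by
      have h1 : ‖deriv g z‖ * (s - dist z c) ≤ ‖deriv g a‖ * (s - dist a c) :=
        hmax (ball_subset_closedBall (hball hz))
      have h2 : (s - dist a c) / 2 ≤ s - dist z c := by
        linarith [dist_triangle z a c, mem_ball.1 hz]
      have h3 := mul_le_mul_of_nonneg_left h2 (norm_nonneg (deriv g z))
      refine le_of_mul_le_mul_right ?_ (half_pos ht)
      linarith)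
  exact ⟨g a, (ball_subset_ball (by linarith)).trans (h.trans (image_mono hball))⟩

theorem exists_differentiableOn_log_ball {f : ℂ → ℂ} {c : ℂ} {r : ℝ} (hr : 0 < r)
    (hf : DifferentiableOn ℂ f (ball c r)) (h0 : ∀ z ∈ ball c r, f z ≠ 0) :
    ∃ L : ℂ → ℂ, DifferentiableOn ℂ L (ball c r) ∧ (∀ z ∈ ball c r, exp (L z) = f z) ∧
      L c = log (f c) := by
  obtain ⟨P, hP⟩ := ((hf.deriv isOpen_ball).div hf h0).isExactOn_ball
  have hc : c ∈ ball c r := mem_ball_self hr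
  set L : ℂ → ℂ := fun z ↦ P z - P c + log (f c) with hL
  have hLd : ∀ z ∈ ball c r, HasDerivAt L (deriv f z / f z) z := fun z hz ↦
    ((hP z hz).sub_const _).add_const _
  refine ⟨L, fun z hz ↦ (hLd z hz).differentiableAt.differentiableWithinAt, ?_, by simp [hL]⟩
  have hq : ∀ z ∈ ball c r, HasDerivAt (fun y ↦ exp (-L y) * f y) 0 z := by
    intro z hz
    have hfz : HasDerivAt f (deriv f z) z :=
      ((hf z hz).differentiableAt (isOpen_ball.mem_nhds hz)).hasDerivAt
    refine ((hLd z hz).neg.cexp.mul hfz).congr_deriv ?_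
    have := h0 z hz
    field_simp
    ring
  intro z hz
  have h1 := (convex_ball c r).norm_image_sub_le_of_norm_hasDerivWithin_le (C := 0)
    (fun y hy ↦ (hq y hy).hasDerivWithinAt) (by simp) hc hz
  have h2 : exp (-L z) * f z = 1 := by
    have h3 : exp (-L c) * f c = 1 := by
      simp only [hL, sub_self, zero_add]
      rw [exp_neg, exp_log (h0 c hc), inv_mul_cancel₀ (h0 c hc)]
    rw [← h3, ← sub_eq_zero, ← norm_le_zero_iff]
    simpa using h1
  rw [exp_neg] at h2
  exact eq_of_inv_mul_eq_one h2

/-- The points at which `cosh ^ 2` is an integer are relatively dense in the plane. -/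
theorem exists_cosh_sq_eq_intCast_mem_ball (w : ℂ) :
    ∃ p ∈ ball w 3, ∃ n : ℤ, cosh p ^ 2 = n := by
  obtain ⟨τ, hτ, n, hn⟩ : ∃ τ : ℝ, |τ - w.re| ≤ 1 ∧ ∃ n : ℕ, Real.cosh τ ^ 2 = n + 1 := by
    have key : ∀ s : ℝ, 0 ≤ s → ∃ τ : ℝ, |τ - s| ≤ 1 ∧ ∃ n : ℕ, Real.cosh τ ^ 2 = n + 1 := by
      intro s hs
      have hs0 : 0 ≤ Real.sinh s := Real.sinh_nonneg_iff.2 hs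
      have h1 : Real.sinh s + 1 ≤ Real.sinh (s + 1) := by
        rw [Real.sinh_add]
        have := Real.one_le_cosh 1
        have := Real.one_le_cosh s
        have : (1 : ℝ) ≤ Real.sinh 1 := Real.self_le_sinh_iff.2 zero_le_one
        nlinarith
      set n := ⌈Real.sinh s ^ 2⌉₊
      have hn1 : Real.sinh s ^ 2 ≤ n := Nat.le_ceil _
      have hn2 : (n : ℝ) < Real.sinh s ^ 2 + 1 := Nat.ceil_lt_add_one (sq_nonneg _)
      refine ⟨Real.arsinh √n, ?_, n, ?_⟩
      · have h2 : s ≤ Real.arsinh √n := by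
          rw [← Real.sinh_le_sinh, Real.sinh_arsinh]
          exact Real.le_sqrt_of_sq_le hn1
        have h3 : Real.arsinh √n ≤ s + 1 := by
          rw [← Real.sinh_le_sinh, Real.sinh_arsinh]
          exact (Real.sqrt_le_left (by linarith)).2 (by nlinarith)
        rw [abs_le]; constructor <;> linarith
      · rw [Real.cosh_sq, Real.sinh_arsinh, Real.sq_sqrt (Nat.cast_nonneg n)]
    rcases le_total 0 w.re with h | h
    · exact key _ h
    · obtain ⟨τ, hτ, n, hn⟩ := key (-w.re) (by linarith)
      refine ⟨-τ, ?_, n, by rwa [Real.cosh_neg]⟩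
      rw [← abs_neg]
      convert hτ using 2
      ring
  set m := round (w.im / Real.pi)
  have hm : |m * Real.pi - w.im| ≤ Real.pi / 2 := by
    have h : |w.im / Real.pi - m| ≤ 1 / 2 := abs_sub_round (w.im / Real.pi)
    have hpi := Real.pi_pos
    rw [abs_sub_comm, show w.im - m * Real.pi = (w.im / Real.pi - m) * Real.pi by field_simp,
      abs_mul, abs_of_pos hpi]
    nlinarith
  refine ⟨τ + (m * Real.pi : ℝ) * I, ?_, n + 1, ?_⟩
  · rw [mem_ball, dist_eq_norm]
    refine (norm_le_abs_re_add_abs_im _).trans_lt ?_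
    simp only [sub_re, sub_im, add_re, add_im, ofReal_re, ofReal_im, re_ofReal_mul, im_ofReal_mul,
      I_re, I_im, mul_zero, mul_one, add_zero, zero_add]
    linarith [Real.pi_lt_d2]
  · have hcos : Real.cos (m * Real.pi) ^ 2 = 1 := by
      have := Real.sin_sq_add_cos_sq (m * Real.pi)
      rw [Real.sin_int_mul_pi] at this
      linarith
    rw [cosh_add, cosh_mul_I, sinh_mul_I, ← ofReal_sin, ← ofReal_cos, Real.sin_int_mul_pi,
      ofReal_zero, zero_mul, mul_zero, add_zero, mul_pow, ← ofReal_pow, hcos, ← ofReal_cosh,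
      ← ofReal_pow, hn]
    push_cast
    ring

theorem norm_log_le_log_add_pi {z : ℂ} {a : ℝ} (hz : z ≠ 0) (h1 : ‖z‖ ≤ a) (h2 : ‖z‖⁻¹ ≤ a) :
    ‖log z‖ ≤ Real.log a + Real.pi := by
  have hz0 : 0 < ‖z‖ := norm_pos_iff.2 hz
  refine (norm_le_abs_re_add_abs_im _).trans ?_
  rw [log_re, log_im]
  refine add_le_add (abs_le.2 ⟨?_, Real.log_le_log hz0 h1⟩) (abs_arg_le_pi z)
  have := Real.log_le_log (inv_pos.2 hz0) h2
  rw [Real.log_inv] at this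
  linarith

theorem norm_cosh_le_exp_norm (z : ℂ) : ‖cosh z‖ ≤ Real.exp ‖z‖ := by
  have h1 := norm_exp_le_exp_norm z
  have h2 := norm_exp_le_exp_norm (-z)
  rw [norm_neg] at h2
  rw [cosh, norm_div, Complex.norm_ofNat]
  linarith [norm_add_le (exp z) (exp (-z))]

/-- A case of **Schottky's theorem**: a holomorphic function on a disc omitting `0` and `1` is
bounded on a smaller disc by a universal constant, if it has absolute value `2` at the centre. -/
theorem exists_norm_le_of_omits_zero_one :
    ∃ K : ℝ, ∀ (f : ℂ → ℂ) (c : ℂ), DifferentiableOn ℂ f (ball c 9) →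
      (∀ z ∈ ball c 9, f z ≠ 0 ∧ f z ≠ 1) → ‖f c‖ = 2 → ∀ z ∈ ball c 7, ‖f z‖ ≤ K := by
  refine ⟨Real.exp (2 * Real.pi * Real.exp (Real.log 3 + Real.pi + 144 * 7) ^ 2), ?_⟩
  intro f c hf h01 hfc z hz
  have h9 : (0 : ℝ) < 9 := by norm_num
  have hc : c ∈ ball c 9 := mem_ball_self h9
  have hpi := Real.pi_gt_three
  obtain ⟨L, hLd, hL, hLc⟩ := exists_differentiableOn_log_ball h9 hf fun z hz ↦ (h01 z hz).1
  set u : ℂ → ℂ := fun z ↦ L z / (2 * Real.pi * I) with hu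
  have hud : DifferentiableOn ℂ u (ball c 9) := hLd.div_const _
  have hfu : ∀ z ∈ ball c 9, f z = exp (2 * Real.pi * I * u z) := fun z hz ↦ by
    rw [← hL z hz, hu]
    congr 1
    field_simp [two_pi_I_ne_zero]
  have hun : ∀ z ∈ ball c 9, ∀ n : ℤ, u z ≠ n := fun z hz n hn ↦ by
    refine (h01 z hz).2 ?_
    rw [hfu z hz, hn, mul_comm, exp_int_mul_two_pi_mul_I]
  have huc : ‖u c‖ ≤ 1 := by
    have h1 : ‖log (f c)‖ ≤ Real.log 2 + Real.pi :=
      norm_log_le_log_add_pi (h01 c hc).1 hfc.le (by rw [hfc]; norm_num)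
    have h2 : ‖(2 * Real.pi * I : ℂ)‖ = 2 * Real.pi := by
      simp [abs_of_pos Real.pi_pos]
    simp only [hu]
    rw [norm_div, h2, hLc, div_le_one (by positivity)]
    linarith [Real.log_two_lt_d9]
  obtain ⟨A, hAd, hA, -⟩ := exists_differentiableOn_log_ball h9 hud
    fun z hz ↦ by simpa using hun z hz 0
  obtain ⟨B, hBd, hB, -⟩ := exists_differentiableOn_log_ball h9 (hud.sub_const 1)
    fun z hz ↦ sub_ne_zero.2 (by simpa using hun z hz 1)
  set a : ℂ → ℂ := fun z ↦ exp (A z / 2)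
  set b : ℂ → ℂ := fun z ↦ exp (B z / 2)
  have ha : ∀ z ∈ ball c 9, a z ^ 2 = u z := fun z hz ↦ by
    rw [← hA z hz, ← exp_nat_mul]; congr 1; push_cast; ring
  have hb : ∀ z ∈ ball c 9, b z ^ 2 = u z - 1 := fun z hz ↦ by
    rw [← hB z hz, ← exp_nat_mul]; congr 1; push_cast; ring
  have hab : ∀ z ∈ ball c 9, (a z - b z) * (a z + b z) = 1 := fun z hz ↦ by
    linear_combination ha z hz - hb z hz
  have hv0 : ∀ z ∈ ball c 9, a z - b z ≠ 0 := fun z hz h ↦ by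
    have := hab z hz
    simp [h] at this
  obtain ⟨g, hgd, hg, hgc⟩ := exists_differentiableOn_log_ball h9
    (f := fun z ↦ a z - b z) ((hAd.div_const 2).cexp.sub (hBd.div_const 2).cexp) hv0
  have hgu : ∀ z ∈ ball c 9, u z = cosh (g z) ^ 2 := fun z hz ↦ by
    have : cosh (g z) = a z := by
      rw [cosh, exp_neg, hg z hz, inv_eq_of_mul_eq_one_right (hab z hz)]
      ring
    rw [this, ha z hz]
  have hgc' : ‖g c‖ ≤ Real.log 3 + Real.pi := by
    have h1 : ‖a c‖ ^ 2 ≤ 1 := by rw [← norm_pow, ha c hc]; exact huc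
    have h2 : ‖b c‖ ^ 2 ≤ 2 := by
      rw [← norm_pow, hb c hc]
      have := norm_sub_le (u c) 1
      rw [norm_one] at this
      linarith
    have h3 : ‖a c‖ ≤ 1 := by nlinarith [norm_nonneg (a c)]
    have h4 : ‖b c‖ ≤ 2 := by nlinarith [norm_nonneg (b c)]
    rw [hgc]
    refine norm_log_le_log_add_pi (hv0 c hc) ((norm_sub_le _ _).trans (by linarith)) ?_
    rw [← norm_inv, inv_eq_of_mul_eq_one_right (hab c hc)]
    exact (norm_add_le _ _).trans (by linarith)
  have hsub : ball c 7 ⊆ ball c 9 := ball_subset_ball (by norm_num)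
  have hgderiv : ∀ y ∈ ball c 7, ‖deriv g y‖ ≤ 144 := by
    intro y hy
    by_contra! hlt
    rw [mem_ball] at hy
    have hsub2 : ball y 2 ⊆ ball c 9 := ball_subset_ball' (by linarith)
    obtain ⟨q, hq⟩ := exists_ball_subset_image_ball (s := 1) (S := 2) one_pos one_lt_two
      (hgd.mono hsub2)
    obtain ⟨p, hp, n, hn⟩ := exists_cosh_sq_eq_intCast_mem_ball q
    obtain ⟨x, hx, rfl⟩ := hq (ball_subset_ball (by linarith) hp)
    have hx9 := hsub2 (ball_subset_ball one_le_two hx)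
    exact hun x hx9 n ((hgu x hx9).trans hn)
  have hgz : ‖g z‖ ≤ Real.log 3 + Real.pi + 144 * 7 := by
    have h := (convex_ball c 7).norm_image_sub_le_of_norm_deriv_le (f := g) (C := 144)
      (fun y hy ↦ (hgd y (hsub hy)).differentiableAt (isOpen_ball.mem_nhds (hsub hy)))
      hgderiv (mem_ball_self (by norm_num)) hz
    rw [mem_ball, dist_eq_norm] at hz
    linarith [norm_sub_norm_le (g z) (g c)]
  rw [hfu z (hsub hz)]
  refine (norm_exp_le_exp_norm _).trans (Real.exp_le_exp.2 ?_)
  rw [hgu z (hsub hz), norm_mul, norm_pow,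
    show ‖(2 * Real.pi * I : ℂ)‖ = 2 * Real.pi by simp [abs_of_pos Real.pi_pos]]
  gcongr
  exact (norm_cosh_le_exp_norm _).trans (Real.exp_le_exp.2 hgz)

/-- An entire function of polynomial growth is a polynomial. -/
theorem exists_polynomial_of_norm_le_pow {G : ℂ → ℂ} (hG : Differentiable ℂ G) {C R : ℝ} {n : ℕ}
    (hle : ∀ z, R < ‖z‖ → ‖G z‖ ≤ C * ‖z‖ ^ n) : ∃ p : ℂ[X], ∀ z, G z = p.eval z := by
  have hzero : ∀ k, n < k → iteratedDeriv k G 0 = 0 := by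
    intro k hk
    have hlim : Tendsto (fun r : ℝ ↦ k.factorial * C * (r ^ n / r ^ k)) atTop (𝓝 0) := by
      simpa using (tendsto_pow_div_pow_atTop_zero hk).const_mul (k.factorial * C)
    refine norm_le_zero_iff.1 (ge_of_tendsto hlim ?_)
    filter_upwards [eventually_gt_atTop 0, eventually_gt_atTop R] with r hr hrR
    refine (norm_iteratedDeriv_le_of_forall_mem_sphere_norm_le (C := C * r ^ n) k hr
      hG.diffContOnCl fun z hz ↦ ?_).trans_eq (by ring)
    rw [mem_sphere_zero_iff_norm] at hz
    simpa [hz] using hle z (hz ▸ hrR)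
  refine ⟨∑ k ∈ Finset.range (n + 1), monomial k ((k.factorial : ℂ)⁻¹ * iteratedDeriv k G 0),
    fun z ↦ ?_⟩
  rw [← taylorSeries_eq_of_entire' 0 z hG, tsum_eq_sum (s := Finset.range (n + 1))]
  · simp [eval_finsetSum]
  · intro k hk
    rw [hzero k (by simpa using hk)]
    simp

/-- An entire function bounded away from zero near infinity is a polynomial. -/
theorem exists_polynomial_of_one_le_norm {G : ℂ → ℂ} (hG : Differentiable ℂ G) {R : ℝ}
    (hle : ∀ z, R < ‖z‖ → 1 ≤ ‖G z‖) : ∃ p : ℂ[X], ∀ z, G z = p.eval z := by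
  set ρ := (|R| + 1)⁻¹ with hρ
  have hρ0 : 0 < ρ := by positivity
  have hbig : ∀ w ∈ ball (0 : ℂ) ρ \ {0}, 1 ≤ ‖G w⁻¹‖ := by
    rintro w ⟨hw, hw0⟩
    refine hle _ ?_
    rw [mem_ball_zero_iff, hρ, lt_inv_comm₀ (norm_pos_iff.2 hw0) (by positivity)] at hw
    rw [norm_inv]
    linarith [le_abs_self R]
  have hne : ∀ w ∈ ball (0 : ℂ) ρ \ {0}, G w⁻¹ ≠ 0 := fun w hw ↦
    norm_pos_iff.1 (one_pos.trans_le (hbig w hw))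
  set h : ℂ → ℂ := fun w ↦ (G w⁻¹)⁻¹ with hh
  have hhd : DifferentiableOn ℂ h (ball 0 ρ \ {0}) := fun w hw ↦
    ((hG _).comp w (differentiableAt_inv hw.2)).inv (hne w hw) |>.differentiableWithinAt
  have hmem := ball_mem_nhds (0 : ℂ) hρ0
  have hd := differentiableOn_update_limUnder_of_bddAbove hmem hhd ⟨1, by
    rintro _ ⟨w, hw, rfl⟩
    simpa [hh] using inv_le_one_of_one_le₀ (hbig w hw)⟩
  set H := Function.update h 0 (limUnder (𝓝[≠] 0) h)
  have hHh : ∀ w ≠ 0, H w = h w := fun w hw ↦ Function.update_of_ne hw _ _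
  obtain ⟨n, k, hk, hk0, heq⟩ :=
    (hd.analyticAt hmem).exists_eventuallyEq_pow_smul_nonzero_iff.2 fun h0 ↦ by
      have h1 : ∀ᶠ w in 𝓝[≠] (0 : ℂ), False := by
        filter_upwards [nhdsWithin_le_nhds h0, nhdsWithin_le_nhds hmem, self_mem_nhdsWithin]
          with w hw hwb hw0
        rw [hHh w hw0] at hw
        exact inv_ne_zero (hne w ⟨hwb, hw0⟩) hw
      exact h1.exists.elim fun _ ↦ id
  have hk2 : ∀ᶠ w in 𝓝 (0 : ℂ), ‖k 0‖ / 2 < ‖k w‖ :=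
    hk.continuousAt.norm.eventually_const_lt (half_lt_self (norm_pos_iff.2 hk0))
  obtain ⟨ε, hε, hball⟩ := Metric.eventually_nhds_iff.1 (heq.and hk2)
  refine exists_polynomial_of_norm_le_pow hG (C := (‖k 0‖ / 2)⁻¹) (R := ε⁻¹) (n := n)
    fun z hz ↦ ?_
  have hz0 : 0 < ‖z‖ := (inv_pos.2 hε).trans hz
  obtain ⟨h1, h2⟩ := @hball z⁻¹ (by rw [dist_zero_right, norm_inv]; exact inv_lt_of_inv_lt₀ hε hz)
  rw [hHh _ (inv_ne_zero (norm_pos_iff.1 hz0))] at h1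
  have h3 : G z = z ^ n * (k z⁻¹)⁻¹ := by
    have := congrArg (·⁻¹) h1
    simpa [hh, mul_comm] using this
  rw [h3, norm_mul, norm_pow, norm_inv, mul_comm]
  have := norm_pos_iff.2 hk0
  gcongr

/-- A case of the **great Picard theorem**: an entire function omitting the values `0` and `1` near
infinity is a polynomial. -/
theorem exists_polynomial_of_omits_zero_one {G : ℂ → ℂ} (hG : Differentiable ℂ G) {R : ℝ}
    (h01 : ∀ z, R < ‖z‖ → G z ≠ 0 ∧ G z ≠ 1) : ∃ p : ℂ[X], ∀ z, G z = p.eval z := by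
  by_cases hlarge : ∃ R', ∀ z, R' < ‖z‖ → 2 < ‖G z‖
  · obtain ⟨R', hR'⟩ := hlarge
    exact exists_polynomial_of_one_le_norm hG fun z hz ↦ by linarith [hR' z hz]
  push Not at hlarge
  obtain ⟨K, hK⟩ := exists_norm_le_of_omits_zero_one
  have hbdd : ∀ w, ‖G w‖ ≤ max 2 K := by
    intro w
    obtain ⟨z₁, hz₁, hG₁⟩ := hlarge (max ‖w‖ ((|R| + 1) * Real.exp 9))
    set r := ‖z₁‖ with hr
    obtain ⟨hwr, hRr⟩ := max_lt_iff.1 hz₁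
    have hr0 : 0 < r := (norm_nonneg w).trans_lt hwr
    have hsphere : ∀ z ∈ sphere (0 : ℂ) r, ‖G z‖ ≤ max 2 K := by
      intro z hz
      rw [mem_sphere_zero_iff_norm] at hz
      rcases le_total ‖G z‖ 2 with hle | hge
      · exact hle.trans (le_max_left _ _)
      refine le_trans ?_ (le_max_right _ _)
      obtain ⟨z₀, hz₀, hG₀⟩ : ∃ z₀, ‖z₀‖ = r ∧ ‖G z₀‖ = 2 := by
        have hpre : IsPreconnected (sphere (0 : ℂ) r) :=
          isPreconnected_sphere (by simp [rank_real_complex]) 0 r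
        obtain ⟨z₀, h1, h2⟩ := hpre.intermediate_value (a := z₁) (b := z) (by simp [hr])
          (by simpa using hz) (hG.continuous.norm.continuousOn) ⟨hG₁, hge⟩
        exact ⟨z₀, by simpa using h1, h2⟩
      have hz₀0 : z₀ ≠ 0 := norm_pos_iff.1 (hz₀ ▸ hr0)
      have hz0 : z ≠ 0 := norm_pos_iff.1 (hz ▸ hr0)
      have hout : ∀ ζ ∈ ball (log z₀) 9, R < ‖exp ζ‖ := by
        intro ζ hζ
        rw [mem_ball, dist_eq_norm] at hζ
        have h1 := (abs_re_le_norm (ζ - log z₀)).trans_lt hζ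
        rw [sub_re, log_re, hz₀, abs_lt] at h1
        rw [norm_exp]
        have h2 : Real.exp (Real.log r - 9) < Real.exp ζ.re := Real.exp_lt_exp.2 (by linarith)
        rw [Real.exp_sub, Real.exp_log hr0] at h2
        have h3 : |R| + 1 < r / Real.exp 9 := (lt_div_iff₀ (Real.exp_pos 9)).2 hRr
        linarith [le_abs_self R]
      have hexp : exp (log z₀ + (arg (z / z₀) : ℂ) * I) = z := by
        have h1 := norm_mul_exp_arg_mul_I (z / z₀)
        rw [norm_div, hz, hz₀, div_self hr0.ne', ofReal_one, one_mul] at h1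
        rw [exp_add, exp_log hz₀0, h1, mul_div_cancel₀ _ hz₀0]
      have h := hK (fun ζ ↦ G (exp ζ)) (log z₀) (hG.comp differentiable_exp).differentiableOn
        (fun ζ hζ ↦ h01 _ (hout ζ hζ)) (by rw [exp_log hz₀0, hG₀])
        (log z₀ + (arg (z / z₀) : ℂ) * I) (by
          rw [mem_ball, dist_eq_norm, add_sub_cancel_left, norm_mul, norm_I, mul_one, norm_real,
            Real.norm_eq_abs]
          linarith [abs_arg_le_pi (z / z₀), Real.pi_lt_four])
      simpa only [hexp] using h
    refine norm_le_of_forall_mem_frontier_norm_le isBounded_ball hG.diffContOnCl (U := ball 0 r)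
      (fun z hz ↦ hsphere z (frontier_ball_subset_sphere hz)) (subset_closure ?_)
    simpa using hwr
  obtain ⟨c, hc⟩ := hG.exists_const_forall_eq_of_bounded
    (isBounded_iff_forall_norm_le.2 ⟨max 2 K, by rintro _ ⟨w, rfl⟩; exact hbdd w⟩)
  exact ⟨Polynomial.C c, fun z ↦ by simp [hc z]⟩

/-- If `f` is a transcendental entire function with a fixed point `x` that is its own
unique preimage, then `f` has infinitely many fixed points. -/
theorem fixedPoints_infinite_of_unique_preimage (f : ℂ → ℂ)
    (hf : Differentiable ℂ f)
    (htrans : ¬ ∃ p : Polynomial ℂ, ∀ z : ℂ, f z = p.eval z)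
    (x : ℂ) (hx : f x = x) (hpre : f ⁻¹' {x} = {x}) :
    {z : ℂ | f z = z}.Infinite := by
  intro hfin
  obtain ⟨R, hR⟩ := isBounded_iff_forall_norm_le.1 hfin.isBounded
  have hG : Differentiable ℂ (dslope f x) := by
    rw [← differentiableOn_univ, differentiableOn_dslope univ_mem]
    exact hf.differentiableOn
  have hfx : ∀ z, f z = x + (z - x) * dslope f x z := fun z ↦ by
    have := sub_smul_dslope f x z
    rw [smul_eq_mul, hx] at this
    rw [this]
    ring
  obtain ⟨p, hp⟩ := exists_polynomial_of_omits_zero_one hG (R := R) fun z hz ↦ by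
    have hnfix : f z ≠ z := fun h ↦ (hR z h).not_gt hz
    refine ⟨fun h ↦ hnfix ?_, fun h ↦ hnfix (by rw [hfx, h]; ring)⟩
    have hmem : z ∈ f ⁻¹' {x} := by simp [hfx z, h]
    rw [hpre, mem_singleton_iff] at hmem
    rw [hmem, hx]
  exact htrans ⟨C x + (X - C x) * p, fun z ↦ by simp [hfx z, hp z]⟩
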